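/- Let X be a finite non-collinear set of points in ℝ² with the L1 metric. Let k ≥ 2 and for i = 1,…,k let (aᵢ,bᵢ) be blue arrows and (cᵢ,dᵢ) be red arrows such that ⟨aᵢ,bᵢ⟩ = ⟨cᵢ,dᵢ⟩ for each i and the lines ⟨a₁,b₁⟩, …, ⟨a_k,b_k⟩ are pairwise distinct. Then for each i there exists q ∈ X with q ≠ bᵢ such that (aᵢ,q) is an arrow, and there exists q' ∈ X with q' ≠ dᵢ such that (cᵢ,q') is an arrow. -/

import Mathlib

noncomputable section
open Classical

/-- The L1 (Manhattan) metric on ℝ². -/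
def rho (u v : ℝ × ℝ) : ℝ := |u.1 - v.1| + |u.2 - v.2|

/-- `z` is between `u` and `v` (w.r.t. the L1 metric): the three points are
pairwise distinct and `ρ(u,v) = ρ(u,z) + ρ(z,v)`. -/
def MBtw (u z v : ℝ × ℝ) : Prop :=
  u ≠ z ∧ z ≠ v ∧ u ≠ v ∧ rho u v = rho u z + rho z v

/-- The line of `X` induced by distinct points `u, v`. -/
def lineThrough (X : Finset (ℝ × ℝ)) (u v : ℝ × ℝ) : Finset (ℝ × ℝ) :=
  X.filter fun z => z = u ∨ z = v ∨ MBtw u z v ∨ MBtw z u v ∨ MBtw u v z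

/-- `X` is non-collinear: no line induced by two distinct points of `X` equals `X`. -/
def NonCollinear (X : Finset (ℝ × ℝ)) : Prop :=
  ∀ u ∈ X, ∀ v ∈ X, u ≠ v → lineThrough X u v ≠ X

/-- `{p,q}` is an increasing pair. -/
def IncPair (p q : ℝ × ℝ) : Prop := 0 < (q.1 - p.1) * (q.2 - p.2)

/-- `{p,q}` is a decreasing pair. -/
def DecPair (p q : ℝ × ℝ) : Prop := (q.1 - p.1) * (q.2 - p.2) < 0

/-- The partial order `≤_I`. -/
def leI (c d : ℝ × ℝ) : Prop := c.1 ≤ d.1 ∧ c.2 ≤ d.2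

/-- `c <_I d`. -/
def ltI (c d : ℝ × ℝ) : Prop := leI c d ∧ c ≠ d

/-- The partial order `≤_D`. -/
def leD (c d : ℝ × ℝ) : Prop := c.1 ≤ d.1 ∧ d.2 ≤ c.2

/-- `c <_D d`. -/
def ltD (c d : ℝ × ℝ) : Prop := leD c d ∧ c ≠ d

/-- `(p,q)` is a blue arrow of `X`. -/
def BlueArrow (X : Finset (ℝ × ℝ)) (p q : ℝ × ℝ) : Prop :=
  p ∈ X ∧ q ∈ X ∧ IncPair p q ∧ ltI p q ∧
  ∀ a b, a ∈ X → b ∈ X → IncPair a b → ltI a b →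
    lineThrough X a b = lineThrough X p q → (ltI q b ∨ (q = b ∧ leI a p))

/-- `(p,q)` is a red arrow of `X`. -/
def RedArrow (X : Finset (ℝ × ℝ)) (p q : ℝ × ℝ) : Prop :=
  p ∈ X ∧ q ∈ X ∧ DecPair p q ∧ ltD p q ∧
  ∀ a b, a ∈ X → b ∈ X → DecPair a b → ltD a b →
    lineThrough X a b = lineThrough X p q → (ltD q b ∨ (q = b ∧ leD a p))

/-- An arrow is a blue or a red arrow. -/
def Arrow (X : Finset (ℝ × ℝ)) (p q : ℝ × ℝ) : Prop :=
  BlueArrow X p q ∨ RedArrow X p q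

/-- `a` is not an endpoint of any arrow of `X`. -/
def NotEndpoint (X : Finset (ℝ × ℝ)) (a : ℝ × ℝ) : Prop :=
  ∀ p q, Arrow X p q → a ≠ p ∧ a ≠ q

/-! If an increasing pair `{a, b}` and a decreasing pair `{c, d}` induce the same line, then `a`,
`c`, `b`, `d` are the corners of an axis-parallel rectangle whose closed outer quadrants contain no
further points of `X`. Hence two such rectangles cross like a plus sign. Up to reflections and
exchange of the coordinates it suffices to find a second blue arrow at the south-west corner `a` of
the narrower rectangle.

For `u ∈ X` strictly north-east of `a`, the blue arrow of `⟨a, u⟩` starts either at `a` or at a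
pivot `p`, which is comparable with all points of `X` in the box `[a, u]` and lies above no points
of `X` except points above `a`. Every `u` used below yields, in the first case, an arrow whose head
is not `b`, so consider the second. Taking for `u` a lowest point strictly higher than `a` that is at
least as far right as `b` gives a point `e` on the horizontal ray from `a` such that all points of
`X` below `e` are above `a`. As `X` is not collinear, there are points above the segment `ae`, and
the leftmost of them gives a point `l` on the vertical ray from `a`, lower than the wider rectangle.
So the south-east corner of that rectangle dominates both `e` and `l`. Finally, take for `u` a
minimal point dominating both: the pivot is comparable with `e` and `l`, so it also dominates both,
a contradiction. -/

/-- The strong order `p ≪ q` of ℝ², strict in both coordinates (as `StrongLT` for functions).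
It holds iff `{p, q}` is an increasing pair with `p <_I q`; the order `≤` of `ℝ × ℝ` is `≤_I`. -/
def StronglyLT (p q : ℝ × ℝ) : Prop := p.1 < q.1 ∧ p.2 < q.2

local infix:50 "≪" => StronglyLT

theorem StronglyLT.lt {p q : ℝ × ℝ} (h : p ≪ q) : p < q :=
  Prod.lt_iff.2 (Or.inl ⟨h.1, h.2.le⟩)

theorem StronglyLT.trans_le {p q r : ℝ × ℝ} (h : p ≪ q) (hqr : q ≤ r) : p ≪ r :=
  ⟨h.1.trans_le hqr.1, h.2.trans_le hqr.2⟩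

theorem incPair_and_ltI_iff {p q : ℝ × ℝ} : IncPair p q ∧ ltI p q ↔ p ≪ q := by
  constructor
  · rintro ⟨hinc, ⟨h₁, h₂⟩, -⟩
    have hne : (q.1 - p.1) * (q.2 - p.2) ≠ 0 := hinc.ne'
    rw [mul_ne_zero_iff, sub_ne_zero, sub_ne_zero] at hne
    exact ⟨h₁.lt_of_ne' hne.1, h₂.lt_of_ne' hne.2⟩
  · intro h
    exact ⟨mul_pos (sub_pos.2 h.1) (sub_pos.2 h.2), h.lt.le, h.lt.ne⟩

section Line

variable {X : Finset (ℝ × ℝ)} {p q u v z : ℝ × ℝ}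

theorem abs_sub_eq_add_iff_mem_uIcc {x y t : ℝ} :
    |x - y| = |x - t| + |t - y| ↔ t ∈ Set.uIcc x y := by
  rw [← segment_eq_uIcc, mem_segment_iff_wbtw, ← dist_add_dist_eq_iff, eq_comm]
  rfl

theorem rho_eq_add_iff_mem_uIcc : rho u v = rho u z + rho z v ↔ z ∈ Set.uIcc u v := by
  rw [Set.uIcc_prod_eq, Set.mem_prod, ← abs_sub_eq_add_iff_mem_uIcc, ← abs_sub_eq_add_iff_mem_uIcc]
  have h₁ := abs_sub_le u.1 z.1 v.1
  have h₂ := abs_sub_le u.2 z.2 v.2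
  unfold rho
  constructor
  · intro h
    constructor <;> linarith
  · rintro ⟨h, h'⟩
    linarith

theorem mem_lineThrough (huv : u ≠ v) : z ∈ lineThrough X u v ↔
    z ∈ X ∧ (z ∈ Set.uIcc u v ∨ u ∈ Set.uIcc z v ∨ v ∈ Set.uIcc u z) := by
  simp only [lineThrough, MBtw, Finset.mem_filter, rho_eq_add_iff_mem_uIcc]
  rcases eq_or_ne z u with rfl | hzu
  · simp
  rcases eq_or_ne z v with rfl | hzv
  · simp
  simp [hzu, hzv, hzu.symm, hzv.symm, huv]

theorem StronglyLT.mem_lineThrough_iff (hpq : p ≪ q) :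
    z ∈ lineThrough X p q ↔ z ∈ X ∧ (z ≤ p ∨ (p ≤ z ∧ z ≤ q) ∨ q ≤ z) := by
  obtain ⟨h₁, h₂⟩ := id hpq
  simp only [mem_lineThrough hpq.lt.ne, Set.uIcc_prod_eq, Set.mem_prod, Set.mem_uIcc, Prod.le_def]
  grind

theorem StronglyLT.le_or_ge_left (hpq : p ≪ q) (hz : z ∈ lineThrough X p q) : z ≤ p ∨ p ≤ z := by
  rcases (hpq.mem_lineThrough_iff.1 hz).2 with h | h | h
  exacts [Or.inl h, Or.inr h.1, Or.inr (hpq.lt.le.trans h)]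

theorem StronglyLT.le_or_ge_right (hpq : p ≪ q) (hz : z ∈ lineThrough X p q) :
    z ≤ q ∨ q ≤ z := by
  rcases (hpq.mem_lineThrough_iff.1 hz).2 with h | h | h
  exacts [Or.inl (h.trans hpq.lt.le), Or.inl h.2, Or.inr h]

theorem left_mem_lineThrough (hu : u ∈ X) : u ∈ lineThrough X u v := by
  simp [lineThrough, hu]

theorem right_mem_lineThrough (hv : v ∈ X) : v ∈ lineThrough X u v := by
  simp [lineThrough, hv]

theorem NonCollinear.exists_fst_btw_snd_ne (hX : NonCollinear X) (hp : p ∈ X) (hq : q ∈ X)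
    (h₁ : p.1 < q.1) (h₂ : q.2 = p.2) : ∃ z ∈ X, p.1 < z.1 ∧ z.1 < q.1 ∧ z.2 ≠ p.2 := by
  have hne : p ≠ q := by grind
  by_contra! h
  refine hX p hp q hq hne (Finset.filter_eq_self.2 fun z hz ↦ ?_)
  have hmem : z ∈ lineThrough X p q := by
    simp only [mem_lineThrough hne, Set.uIcc_prod_eq, Set.mem_prod, Set.mem_uIcc]
    grind
  exact (Finset.mem_filter.1 hmem).2

end Line

section Isometry

variable {X : Finset (ℝ × ℝ)} {f : ℝ × ℝ ≃ ℝ × ℝ}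

theorem lineThrough_map (hf : ∀ u v, rho (f u) (f v) = rho u v) (u v : ℝ × ℝ) :
    lineThrough (X.map f.toEmbedding) (f u) (f v) = (lineThrough X u v).map f.toEmbedding := by
  simp only [lineThrough, Finset.filter_map]
  congr 1
  refine Finset.filter_congr fun z _ ↦ ?_
  simp [MBtw, hf]

theorem NonCollinear.map (hX : NonCollinear X) (hf : ∀ u v, rho (f u) (f v) = rho u v) :
    NonCollinear (X.map f.toEmbedding) := by
  simp only [NonCollinear, Finset.forall_mem_map]
  intro u hu v hv huv hline
  refine hX u hu v hv (by rintro rfl; exact huv rfl) ?_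
  exact Finset.map_injective _ ((lineThrough_map hf u v).symm.trans hline)

theorem rho_prodComm (u v : ℝ × ℝ) :
    rho (Equiv.prodComm ℝ ℝ u) (Equiv.prodComm ℝ ℝ v) = rho u v :=
  add_comm _ _

theorem blueArrow_map_prodComm_iff {p q : ℝ × ℝ} :
    BlueArrow (X.map (Equiv.prodComm ℝ ℝ).toEmbedding) p.swap q.swap ↔ BlueArrow X p q := by
  have hline := lineThrough_map (X := X) rho_prodComm
  simp only [Equiv.prodComm_apply] at hline
  have hmem (z : ℝ × ℝ) : z.swap ∈ X.map (Equiv.prodComm ℝ ℝ).toEmbedding ↔ z ∈ X :=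
    Finset.mem_map' (Equiv.prodComm ℝ ℝ).toEmbedding
  have hle (u v : ℝ × ℝ) : leI u.swap v.swap ↔ leI u v := and_comm
  have hinc (u v : ℝ × ℝ) : IncPair u.swap v.swap ↔ IncPair u v := by
    simp [IncPair, mul_comm]
  rw [BlueArrow, Prod.swap_surjective.forall₂]
  simp only [BlueArrow, ltI, hline, hmem, hle, hinc, Finset.map_inj, Prod.swap_inj, ne_eq]

/-- The reflection `(x, y) ↦ (x, -y)`, which interchanges the two colours of arrows. -/
def reflect : ℝ × ℝ ≃ ℝ × ℝ := (Equiv.refl ℝ).prodCongr (Equiv.neg ℝ)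

theorem reflect_reflect (p : ℝ × ℝ) : reflect (reflect p) = p :=
  Prod.ext rfl (neg_neg p.2)

theorem rho_reflect (u v : ℝ × ℝ) : rho (reflect u) (reflect v) = rho u v := by
  simp only [rho, reflect, Equiv.prodCongr_apply, Prod.map, Equiv.refl_apply, Equiv.neg_apply,
    neg_sub_neg, abs_sub_comm]

theorem blueArrow_map_reflect_iff {p q : ℝ × ℝ} :
    BlueArrow (X.map reflect.toEmbedding) (reflect p) (reflect q) ↔ RedArrow X p q := by
  have hline := lineThrough_map (X := X) rho_reflect
  have hmem (z : ℝ × ℝ) : reflect z ∈ X.map reflect.toEmbedding ↔ z ∈ X :=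
    Finset.mem_map' reflect.toEmbedding
  have hle (u v : ℝ × ℝ) : leI (reflect u) (reflect v) ↔ leD u v := by
    simp [leI, leD, reflect]
  have hinc (u v : ℝ × ℝ) : IncPair (reflect u) (reflect v) ↔ DecPair u v := by
    rw [IncPair, DecPair, ← neg_pos, ← mul_neg]
    simp [reflect, neg_add_eq_sub]
  rw [BlueArrow, reflect.surjective.forall₂]
  simp only [RedArrow, ltI, ltD, hline, hmem, hle, hinc, Finset.map_inj, reflect.injective.eq_iff,
    ne_eq]

end Isometry

section BlueArrow

variable {X : Finset (ℝ × ℝ)} {a b p q u : ℝ × ℝ}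

theorem blueArrow_iff : BlueArrow X p q ↔ p ∈ X ∧ q ∈ X ∧ p ≪ q ∧
    ∀ x ∈ X, ∀ y ∈ X, x ≪ y → lineThrough X x y = lineThrough X p q →
      q < y ∨ (q = y ∧ x ≤ p) := by
  simp only [BlueArrow, ← incPair_and_ltI_iff, and_imp, and_assoc]
  have hle (x y : ℝ × ℝ) : leI x y ↔ x ≤ y := Iff.rfl
  simp only [ltI, hle, ← lt_iff_le_and_ne]
  grind

theorem BlueArrow.stronglyLT (h : BlueArrow X p q) : p ≪ q := (blueArrow_iff.1 h).2.2.1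

theorem BlueArrow.head_le (h : BlueArrow X p q) (ha : a ∈ X) (hu : u ∈ X) (hau : a ≪ u)
    (hline : lineThrough X a u = lineThrough X p q) : q ≤ u := by
  rcases (blueArrow_iff.1 h).2.2.2 a ha u hu hau hline with h | h
  exacts [h.le, h.1.le]

/-- Points of a line are comparable with its inducing points, so a minimal head is the least one,
and among the tails of that head a maximal one is the greatest. -/
theorem exists_blueArrow_lineThrough_eq (ha : a ∈ X) (hb : b ∈ X) (hab : a ≪ b) :
    ∃ p q, BlueArrow X p q ∧ lineThrough X p q = lineThrough X a b := by
  let heads := X.filter fun y ↦ ∃ x ∈ X, x ≪ y ∧ lineThrough X x y = lineThrough X a b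
  obtain ⟨q, hq⟩ : ∃ q, Minimal (· ∈ heads) q :=
    Finset.exists_minimal ⟨b, Finset.mem_filter.2 ⟨hb, a, ha, hab, rfl⟩⟩
  obtain ⟨hqX, hqtail⟩ := Finset.mem_filter.1 hq.prop
  let tails := X.filter fun x ↦ x ≪ q ∧ lineThrough X x q = lineThrough X a b
  obtain ⟨p, hp⟩ : ∃ p, Maximal (· ∈ tails) p :=
    Finset.exists_maximal (hqtail.imp fun _ h ↦ Finset.mem_filter.2 h)
  obtain ⟨hpX, hpq, hline⟩ := Finset.mem_filter.1 hp.prop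
  refine ⟨p, q, blueArrow_iff.2 ⟨hpX, hqX, hpq, fun x hx y hy hxy hxyl ↦ ?_⟩, hline⟩
  have hqy : q ≤ y := by
    rcases hpq.le_or_ge_right (hxyl ▸ right_mem_lineThrough hy) with h | h
    · exact hq.le_of_le (Finset.mem_filter.2 ⟨hy, x, hx, hxy, hxyl.trans hline⟩) h
    · exact h
  refine hqy.lt_or_eq.imp_right fun hq_eq ↦ ⟨hq_eq, ?_⟩
  subst hq_eq
  rcases hpq.le_or_ge_left (hxyl ▸ left_mem_lineThrough hx) with h | h
  · exact h
  · exact hp.le_of_ge (Finset.mem_filter.2 ⟨hx, hxy, hxyl.trans hline⟩) h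

/-- `p` is the tail of the blue arrow of `⟨a, u⟩` in the case that this tail is not `a`, recorded
through the two consequences of `⟨p, q⟩ = ⟨a, u⟩` that obstruct the position of `p`. -/
structure IsPivot (X : Finset (ℝ × ℝ)) (a u p : ℝ × ℝ) : Prop where
  mem : p ∈ X
  lt : a < p
  stronglyLT : p ≪ u
  le_or_ge : ∀ z ∈ X, a ≤ z → z ≤ u → z ≤ p ∨ p ≤ z
  ge_of_le : ∀ z ∈ X, z ≤ p → a ≤ z

theorem exists_blueArrow_or_isPivot (ha : Minimal (· ∈ X) a) (hu : u ∈ X) (hau : a ≪ u) :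
    (∃ q, BlueArrow X a q ∧ q ≤ u) ∨ ∃ p, IsPivot X a u p := by
  obtain ⟨p, q, hpq, hline⟩ := exists_blueArrow_lineThrough_eq ha.prop hu hau
  have hlt := hpq.stronglyLT
  have hqu : q ≤ u := hpq.head_le ha.prop hu hau hline.symm
  rcases eq_or_ne a p with rfl | hap
  · exact Or.inl ⟨q, hpq, hqu⟩
  have hap_le : a ≤ p := by
    rcases hlt.le_or_ge_left (hline ▸ left_mem_lineThrough ha.prop) with h | h
    exacts [h, ha.le_of_le hpq.1 h]
  refine Or.inr ⟨p, hpq.1, hap_le.lt_of_ne hap, hlt.trans_le hqu, fun z hz haz hzu ↦ ?_,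
    fun z hz hzp ↦ ?_⟩
  · apply hlt.le_or_ge_left
    rw [hline, hau.mem_lineThrough_iff]
    exact ⟨hz, Or.inr (Or.inl ⟨haz, hzu⟩)⟩
  · have hz_line : z ∈ lineThrough X a u := hline ▸ hlt.mem_lineThrough_iff.2 ⟨hz, Or.inl hzp⟩
    rcases hau.le_or_ge_left hz_line with h | h
    exacts [ha.le_of_le hz h, h]

end BlueArrow

section SecondArrow

variable {X : Finset (ℝ × ℝ)} {a c d e l r w : ℝ × ℝ}

theorem exists_blueArrow_or_clear_right (ha : Minimal (· ∈ X) a) (hd : d ∈ X) (had₁ : a.1 < d.1)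
    (hd₂ : d.2 = a.2) (hr : r ∈ X) (hdr : d.1 ≤ r.1) (har : a.2 < r.2) :
    (∃ q, BlueArrow X a q ∧ q.2 ≤ r.2) ∨
      ∃ e ∈ X, a.1 < e.1 ∧ e.1 ≤ d.1 ∧ e.2 = a.2 ∧ ∀ z ∈ X, z ≤ e → a ≤ z := by
  obtain ⟨v, hv, hmin⟩ := (X.filter fun z ↦ d.1 ≤ z.1 ∧ a.2 < z.2).exists_min_image Prod.snd
    ⟨r, Finset.mem_filter.2 ⟨hr, hdr, har⟩⟩
  simp only [Finset.mem_filter, and_imp] at hv hmin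
  obtain ⟨hvX, hdv, hav⟩ := hv
  rcases exists_blueArrow_or_isPivot ha hvX ⟨had₁.trans_le hdv, hav⟩ with ⟨q, hq, hqv⟩ | ⟨p, hp⟩
  · exact Or.inl ⟨q, hq, hqv.2.trans (hmin r hr hdr har)⟩
  right
  rcases hp.le_or_ge d hd ⟨had₁.le, hd₂.ge⟩ ⟨hdv, hd₂.trans_le hav.le⟩ with hdp | hpd
  · exact ⟨d, hd, had₁, le_rfl, hd₂, fun z hz hzd ↦ hp.ge_of_le z hz (hzd.trans hdp)⟩
  · have hp₂ : p.2 = a.2 := le_antisymm (hpd.2.trans_eq hd₂) hp.lt.le.2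
    have hp₁ : a.1 < p.1 := hp.lt.le.1.lt_of_ne fun h ↦ hp.lt.ne (Prod.ext h hp₂.symm)
    exact ⟨p, hp.mem, hp₁, hpd.1, hp₂, hp.ge_of_le⟩

theorem exists_blueArrow_or_clear_up (hX : NonCollinear X) (ha : Minimal (· ∈ X) a) (he : e ∈ X)
    (hae : a.1 < e.1) (he₂ : e.2 = a.2) (hclear : ∀ z ∈ X, z ≤ e → a ≤ z) :
    (∃ q, BlueArrow X a q ∧ q.1 < e.1) ∨
      ∃ l ∈ X, l.1 = a.1 ∧ a.2 < l.2 ∧ ∀ z ∈ X, z ≤ l → a ≤ z := by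
  have exists_above (x : ℝ × ℝ) (hx : x ∈ X) (hax : a.1 < x.1) (hxe : x.1 ≤ e.1)
      (hx₂ : x.2 = a.2) : ∃ z ∈ X, a ≪ z ∧ z.1 < x.1 := by
    obtain ⟨z, hz, haz, hzx, hz₂⟩ := hX.exists_fst_btw_snd_ne ha.prop hx hax hx₂
    have haz₂ : a.2 ≤ z.2 := by
      by_contra! h
      exact h.not_ge (hclear z hz ⟨(hzx.trans_le hxe).le, h.le.trans_eq he₂.symm⟩).2
    exact ⟨z, hz, ⟨haz, haz₂.lt_of_ne' hz₂⟩, hzx⟩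
  obtain ⟨t, ht, hat, hte⟩ := exists_above e he hae le_rfl he₂
  obtain ⟨u, hu, hmin⟩ := (X.filter (a ≪ ·)).exists_min_image Prod.fst
    ⟨t, Finset.mem_filter.2 ⟨ht, hat⟩⟩
  simp only [Finset.mem_filter, and_imp] at hu hmin
  have hue : u.1 < e.1 := (hmin t ht hat).trans_lt hte
  rcases exists_blueArrow_or_isPivot ha hu.1 hu.2 with ⟨q, hq, hqu⟩ | ⟨p, hp⟩
  · exact Or.inl ⟨q, hq, hqu.1.trans_lt hue⟩
  have hp₂ : a.2 < p.2 := by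
    refine hp.lt.le.2.lt_of_ne fun h ↦ ?_
    have hp₁ : a.1 < p.1 := hp.lt.le.1.lt_of_ne fun h' ↦ hp.lt.ne (Prod.ext h' h)
    obtain ⟨z, hz, haz, hzp⟩ := exists_above p hp.mem hp₁ (hp.stronglyLT.1.trans hue).le h.symm
    exact (hzp.trans hp.stronglyLT.1).not_ge (hmin z hz haz)
  have hp₁ : p.1 = a.1 := by
    by_contra h
    exact hp.stronglyLT.1.not_ge (hmin p hp.mem ⟨hp.lt.le.1.lt_of_ne' h, hp₂⟩)
  exact Or.inr ⟨p, hp.mem, hp₁, hp₂, hp.ge_of_le⟩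

theorem exists_blueArrow_le_of_axis_points_le (ha : Minimal (· ∈ X) a) (he : e ∈ X)
    (hae : a.1 < e.1) (he₂ : e.2 = a.2) (hl : l ∈ X) (hl₁ : l.1 = a.1) (hal : a.2 < l.2)
    (hr : r ∈ X) (her : e ≤ r) (hlr : l ≤ r) : ∃ q, BlueArrow X a q ∧ q ≤ r := by
  obtain ⟨u, hur, hu⟩ := (X.filter fun z ↦ e ≤ z ∧ l ≤ z).exists_le_minimal
    (Finset.mem_filter.2 ⟨hr, her, hlr⟩)
  obtain ⟨huX, heu, hlu⟩ := Finset.mem_filter.1 hu.prop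
  rcases exists_blueArrow_or_isPivot ha huX ⟨hae.trans_le heu.1, hal.trans_le hlu.2⟩ with
    ⟨q, hq, hqu⟩ | ⟨p, hp⟩
  · exact ⟨q, hq, hqu.trans hur⟩
  have hep := hp.le_or_ge e he ⟨hae.le, he₂.ge⟩ heu
  have hlp := hp.le_or_ge l hl ⟨hl₁.ge, hal.le⟩ hlu
  have hap := hp.lt
  have hlower : e ≤ p ∧ l ≤ p := by
    simp only [Prod.lt_iff, Prod.le_def] at *
    grind
  exact (hp.stronglyLT.lt.not_ge (hu.le_of_le (Finset.mem_filter.2 ⟨hp.mem, hlower⟩)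
    hp.stronglyLT.lt.le)).elim

theorem exists_blueArrow_of_wide (hX : NonCollinear X) (ha : Minimal (· ∈ X) a) (hd : d ∈ X)
    (had : a.1 < d.1) (hd₂ : d.2 = a.2) (hw : w ∈ X) (hwa : w.1 < a.1) (haw : a.2 < w.2)
    (hr : r ∈ X) (hdr : d.1 ≤ r.1) (hwr : w.2 ≤ r.2) :
    ∃ q, BlueArrow X a q ∧ (q.1 < d.1 ∨ q.2 ≤ r.2) := by
  have har : a.2 < r.2 := haw.trans_le hwr
  rcases exists_blueArrow_or_clear_right ha hd had hd₂ hr hdr har with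
    ⟨q, hq, hqr⟩ | ⟨e, he, hae, hed, he₂, hclear⟩
  · exact ⟨q, hq, Or.inr hqr⟩
  rcases exists_blueArrow_or_clear_up hX ha he hae he₂ hclear with
    ⟨q, hq, hqe⟩ | ⟨l, hl, hl₁, hal, hclear⟩
  · exact ⟨q, hq, Or.inl (hqe.trans_le hed)⟩
  have hlw : l.2 < w.2 := by
    by_contra! h
    exact hwa.not_ge (hclear w hw ⟨hwa.le.trans_eq hl₁.symm, h⟩).1
  have her : e ≤ r := ⟨hed.trans hdr, he₂.trans_le har.le⟩
  have hlr : l ≤ r := ⟨hl₁.trans_le (had.le.trans hdr), (hlw.trans_le hwr).le⟩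
  obtain ⟨q, hq, hqr⟩ := exists_blueArrow_le_of_axis_points_le ha he hae he₂ hl hl₁ hal hr her hlr
  exact ⟨q, hq, Or.inr hqr.2⟩

theorem exists_blueArrow_of_tall (hX : NonCollinear X) (ha : Minimal (· ∈ X) a) (hc : c ∈ X)
    (hac : a.2 < c.2) (hc₁ : c.1 = a.1) (hw : w ∈ X) (hwa : w.2 < a.2) (haw : a.1 < w.1)
    (hr : r ∈ X) (hcr : c.2 ≤ r.2) (hwr : w.1 ≤ r.1) :
    ∃ q, BlueArrow X a q ∧ (q.2 < c.2 ∨ q.1 ≤ r.1) := by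
  have hmem {z : ℝ × ℝ} (hz : z ∈ X) : z.swap ∈ X.map (Equiv.prodComm ℝ ℝ).toEmbedding :=
    Finset.mem_map_of_mem _ hz
  have ha_swap : Minimal (· ∈ X.map (Equiv.prodComm ℝ ℝ).toEmbedding) a.swap := by
    refine ⟨hmem ha.prop, Finset.forall_mem_map.2 fun z hz hza ↦ ?_⟩
    exact Prod.swap_le_swap.2 (ha.le_of_le hz (Prod.swap_le_swap.1 hza))
  obtain ⟨q, hq, hlt⟩ := exists_blueArrow_of_wide (hX.map rho_prodComm) ha_swap (hmem hc) hac hc₁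
    (hmem hw) hwa haw (hmem hr) hcr hwr
  exact ⟨q.swap, blueArrow_map_prodComm_iff.1 (by rwa [Prod.swap_swap]), hlt⟩

end SecondArrow

section Rectangle

variable {X : Finset (ℝ × ℝ)} {a b c d a' b' : ℝ × ℝ}

/-- The axis-parallel rectangle with south-west corner `a` and north-east corner `b` has its four
corners in `X`, and `X` meets the closed outer quadrants at `a`, `b` and the north-west corner only
in these corners. -/
structure IsRect (X : Finset (ℝ × ℝ)) (a b : ℝ × ℝ) : Prop where
  lt : a ≪ b
  sw_minimal : Minimal (· ∈ X) a
  ne_maximal : Maximal (· ∈ X) b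
  nw_mem : (a.1, b.2) ∈ X
  se_mem : (b.1, a.2) ∈ X
  nw_eq : ∀ z ∈ X, z.1 ≤ a.1 → b.2 ≤ z.2 → z = (a.1, b.2)

/-- The rectangle `[a', b']` is narrower and taller than `[a, b]`: the two form a plus sign. -/
def Crosses (a' b' a b : ℝ × ℝ) : Prop := a.1 < a'.1 ∧ b'.1 < b.1 ∧ a'.2 < a.2 ∧ b.2 < b'.2

theorem IsRect.crosses_of_fst_lt (R : IsRect X a b) (S : IsRect X a' b') (h : a.1 < a'.1) :
    Crosses a' b' a b := by
  have hsw : a'.2 < a.2 := by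
    by_contra! h'
    exact h.not_ge (S.sw_minimal.le_of_le R.sw_minimal.prop ⟨h.le, h'⟩).1
  have hnw : b.2 < b'.2 := by
    by_contra! h'
    exact h.ne ((Prod.ext_iff.1 (S.nw_eq _ R.nw_mem h.le h')).1)
  have hne : b'.1 < b.1 := by
    by_contra! h'
    exact hnw.not_ge (R.ne_maximal.le_of_ge S.ne_maximal.prop ⟨h', hnw.le⟩).2
  exact ⟨h, hne, hsw, hnw⟩

theorem IsRect.eq_of_fst_eq (R : IsRect X a b) (S : IsRect X a' b') (h : a.1 = a'.1) :
    a = a' ∧ b = b' := by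
  have hsw : a = a' := by
    rcases le_total a.2 a'.2 with h' | h'
    · exact S.sw_minimal.eq_of_le R.sw_minimal.prop ⟨h.le, h'⟩
    · exact (R.sw_minimal.eq_of_le S.sw_minimal.prop ⟨h.ge, h'⟩).symm
  have hnw : b.2 = b'.2 := by
    rcases le_total b.2 b'.2 with h' | h'
    · exact (Prod.ext_iff.1 (R.nw_eq _ S.nw_mem h.ge h')).2.symm
    · exact (Prod.ext_iff.1 (S.nw_eq _ R.nw_mem h.le h')).2
  have hne : b = b' := by
    rcases le_total b.1 b'.1 with h' | h'
    · exact (R.ne_maximal.eq_of_le S.ne_maximal.prop ⟨h', hnw.le⟩)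
    · exact (S.ne_maximal.eq_of_le R.ne_maximal.prop ⟨h', hnw.ge⟩).symm
  exact ⟨hsw, hne⟩

theorem IsRect.exists_blueArrow_ne (hX : NonCollinear X) (R : IsRect X a b) (S : IsRect X a' b')
    (hne : ¬(a = a' ∧ b = b')) : ∃ q ≠ b, BlueArrow X a q := by
  rcases lt_trichotomy a.1 a'.1 with h | h | h
  · obtain ⟨hleft, hright, hbelow, habove⟩ := R.crosses_of_fst_lt S h
    obtain ⟨q, hq, hlt⟩ := exists_blueArrow_of_tall hX R.sw_minimal R.nw_mem R.lt.2 rfl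
      S.sw_minimal.prop hbelow hleft S.nw_mem habove.le le_rfl
    exact ⟨q, by grind [S.lt.1], hq⟩
  · exact absurd (R.eq_of_fst_eq S h) hne
  · obtain ⟨hleft, hright, hbelow, habove⟩ := S.crosses_of_fst_lt R h
    obtain ⟨q, hq, hlt⟩ := exists_blueArrow_of_wide hX R.sw_minimal R.se_mem R.lt.1 rfl
      S.sw_minimal.prop hleft hbelow S.se_mem hright.le le_rfl
    exact ⟨q, by grind [S.lt.2], hq⟩

/-- The line induced by the increasing pair `{a, b}` is also induced by the decreasing pair
`{c, d}`, where `a <_I b` and `c <_D d`. -/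
structure IsBicolored (X : Finset (ℝ × ℝ)) (a b c d : ℝ × ℝ) : Prop where
  sw_mem : a ∈ X
  ne_mem : b ∈ X
  nw_mem : c ∈ X
  se_mem : d ∈ X
  increasing : a ≪ b
  decreasing : reflect c ≪ reflect d
  line_eq : lineThrough X a b = lineThrough X c d

theorem IsBicolored.of_arrows (hab : BlueArrow X a b) (hcd : RedArrow X c d)
    (hline : lineThrough X a b = lineThrough X c d) : IsBicolored X a b c d :=
  ⟨hab.1, hab.2.1, hcd.1, hcd.2.1, hab.stronglyLT,
    (blueArrow_map_reflect_iff.2 hcd).stronglyLT, hline⟩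

theorem mem_lineThrough_iff_of_reflect {z : ℝ × ℝ} (hcd : reflect c ≪ reflect d) :
    z ∈ lineThrough X c d ↔ z ∈ X ∧ (leD z c ∨ (leD c z ∧ leD z d) ∨ leD d z) := by
  have hle (u v : ℝ × ℝ) : reflect u ≤ reflect v ↔ leD u v := by
    simp [Prod.le_def, leD, reflect]
  rw [← Finset.mem_map' reflect.toEmbedding, ← lineThrough_map rho_reflect]
  simp only [Equiv.toEmbedding_apply, hcd.mem_lineThrough_iff, hle]
  rw [← Equiv.toEmbedding_apply, Finset.mem_map']

theorem IsBicolored.map_reflect (h : IsBicolored X a b c d) :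
    IsBicolored (X.map reflect.toEmbedding) (reflect c) (reflect d) (reflect a) (reflect b) where
  sw_mem := Finset.mem_map_of_mem _ h.nw_mem
  ne_mem := Finset.mem_map_of_mem _ h.se_mem
  nw_mem := Finset.mem_map_of_mem _ h.sw_mem
  se_mem := Finset.mem_map_of_mem _ h.ne_mem
  increasing := h.decreasing
  decreasing := by rw [reflect_reflect, reflect_reflect]; exact h.increasing
  line_eq := by rw [lineThrough_map rho_reflect, lineThrough_map rho_reflect, h.line_eq]

theorem IsBicolored.mem_iff {z : ℝ × ℝ} (h : IsBicolored X a b c d) (hz : z ∈ X) :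
    (z ≤ a ∨ (a ≤ z ∧ z ≤ b) ∨ b ≤ z) ↔ (leD z c ∨ (leD c z ∧ leD z d) ∨ leD d z) := by
  have hline : z ∈ lineThrough X a b ↔ z ∈ lineThrough X c d := by rw [h.line_eq]
  simpa [h.increasing.mem_lineThrough_iff, mem_lineThrough_iff_of_reflect h.decreasing, hz]
    using hline

theorem IsBicolored.corners (h : IsBicolored X a b c d) : c = (a.1, b.2) ∧ d = (b.1, a.2) := by
  obtain ⟨hab₁, hab₂⟩ := h.increasing
  obtain ⟨hcd₁, hcd₂⟩ : c.1 < d.1 ∧ d.2 < c.2 := by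
    simpa [StronglyLT, reflect] using h.decreasing
  have ha := h.mem_iff h.sw_mem
  have hb := h.mem_iff h.ne_mem
  have hc := h.mem_iff h.nw_mem
  have hd := h.mem_iff h.se_mem
  simp only [Prod.le_def, leD] at ha hb hc hd
  obtain ⟨hac, hdb⟩ : a.1 ≤ c.1 ∧ d.1 ≤ b.1 := by grind
  obtain ⟨hca, hbd⟩ : c.1 ≤ a.1 ∧ b.1 ≤ d.1 := by grind
  obtain ⟨hcb, had⟩ : c.2 ≤ b.2 ∧ a.2 ≤ d.2 := by grind
  obtain ⟨hbc, hda⟩ : b.2 ≤ c.2 ∧ d.2 ≤ a.2 := by grind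
  exact ⟨Prod.ext (hca.antisymm hac) (hcb.antisymm hbc),
    Prod.ext (hdb.antisymm hbd) (hda.antisymm had)⟩

theorem IsBicolored.isRect (h : IsBicolored X a b c d) : IsRect X a b := by
  have hlt := h.increasing
  have hmem (z : ℝ × ℝ) (hz : z ∈ X) := h.mem_iff hz
  obtain ⟨rfl, rfl⟩ := h.corners
  obtain ⟨hsw, hne, hnw, hse, -⟩ := h
  simp only [Prod.le_def, leD] at hmem
  obtain ⟨h₁, h₂⟩ := id hlt
  refine ⟨hlt, ⟨hsw, fun z hz hza ↦ ?_⟩, ⟨hne, fun z hz hbz ↦ ?_⟩, hnw, hse, fun z hz hza hbz ↦ ?_⟩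
  all_goals
    have := hmem z hz
    grind [Prod.le_def]

theorem IsBicolored.exists_blueArrow_ne {a' b' c' d' : ℝ × ℝ} (h : IsBicolored X a b c d)
    (hX : NonCollinear X) (h' : IsBicolored X a' b' c' d')
    (hne : lineThrough X a b ≠ lineThrough X a' b') : ∃ q ≠ b, BlueArrow X a q := by
  refine h.isRect.exists_blueArrow_ne hX h'.isRect ?_
  rintro ⟨rfl, rfl⟩
  exact hne rfl

theorem IsBicolored.exists_redArrow_ne {a' b' c' d' : ℝ × ℝ} (h : IsBicolored X a b c d)
    (hX : NonCollinear X) (h' : IsBicolored X a' b' c' d')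
    (hne : lineThrough X a b ≠ lineThrough X a' b') : ∃ q ≠ d, RedArrow X c q := by
  have hne_reflect : lineThrough (X.map reflect.toEmbedding) (reflect c) (reflect d) ≠
      lineThrough (X.map reflect.toEmbedding) (reflect c') (reflect d') := by
    rw [h.map_reflect.line_eq, h'.map_reflect.line_eq]
    rwa [lineThrough_map rho_reflect, lineThrough_map rho_reflect, ne_eq, Finset.map_inj]
  obtain ⟨q, hqd, hq⟩ :=
    h.map_reflect.exists_blueArrow_ne (hX.map rho_reflect) h'.map_reflect hne_reflect
  obtain ⟨q, rfl⟩ := reflect.surjective q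
  exact ⟨q, ne_of_apply_ne reflect hqd, blueArrow_map_reflect_iff.1 hq⟩

end Rectangle

theorem counting_extra_arrows_general {X : Finset (ℝ × ℝ)} (hX : NonCollinear X) {ι : Type*}
    [Nontrivial ι] {a b c d : ι → ℝ × ℝ} (h : ∀ i, IsBicolored X (a i) (b i) (c i) (d i))
    (hdist : ∀ i j, i ≠ j → lineThrough X (a i) (b i) ≠ lineThrough X (a j) (b j)) (i : ι) :
    (∃ q ≠ b i, BlueArrow X (a i) q) ∧ ∃ q ≠ d i, RedArrow X (c i) q := by
  obtain ⟨j, hji⟩ := exists_ne i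
  exact ⟨(h i).exists_blueArrow_ne hX (h j) (hdist i j hji.symm),
    (h i).exists_redArrow_ne hX (h j) (hdist i j hji.symm)⟩

/-- If `(aᵢ,bᵢ)` are blue arrows and `(cᵢ,dᵢ)` red arrows inducing the same
pairwise distinct lines (`k ≥ 2` of them), then each `aᵢ` is the start of an
arrow other than `(aᵢ,bᵢ)`, and each `cᵢ` is the start of an arrow other than
`(cᵢ,dᵢ)`. -/
theorem counting_extra_arrows (X : Finset (ℝ × ℝ)) (k : ℕ) (hk : 2 ≤ k)
    (a b c d : Fin k → ℝ × ℝ)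
    (hnc : NonCollinear X)
    (hblue : ∀ i, BlueArrow X (a i) (b i))
    (hred : ∀ i, RedArrow X (c i) (d i))
    (hsame : ∀ i, lineThrough X (a i) (b i) = lineThrough X (c i) (d i))
    (hdist : ∀ i j, i ≠ j → lineThrough X (a i) (b i) ≠ lineThrough X (a j) (b j)) :
    ∀ i, (∃ q ∈ X, q ≠ b i ∧ Arrow X (a i) q) ∧
      (∃ q' ∈ X, q' ≠ d i ∧ Arrow X (c i) q') := by
  intro i
  have : Nontrivial (Fin k) := Fin.nontrivial_iff_two_le.2 hk
  obtain ⟨⟨q, hqb, hq⟩, q', hqd, hq'⟩ := counting_extra_arrows_general hnc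
    (fun i ↦ .of_arrows (hblue i) (hred i) (hsame i)) hdist i
  exact ⟨⟨q, hq.2.1, hqb, .inl hq⟩, q', hq'.2.1, hqd, .inr hq'⟩
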